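/- arXiv:2103.16186 — 3 statements merged into one kernel-verified Lean document; each statement's English description precedes it below -/
import Mathlib

section
/- Let T be a set of three affinely independent points in ℕ_0^2. Then for every α ∈ T there exists a point β ∈ E_1^∞(T) with β ≠ α such that both coordinates of β − α are positive integers. -/
open MeasureTheory
open scoped Classical ENNReal

noncomputable section

/-- The `d`-dimensional torus, modelled as `d` copies of `ℝ/ℤ`,
whose product `volume` measure is the normalized Haar measure. -/
abbrev Torus (d : ℕ) := Fin d → AddCircle (1 : ℝ)

/-- The character `z ↦ z^α` on the torus. -/
def torusChar {d : ℕ} (α : Fin d → ℤ) (x : Torus d) : ℂ :=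
  ∏ j, fourier (α j) (x j)

/-- The trigonometric polynomial with frequencies in `F` and coefficients `a`. -/
def trigPoly {d : ℕ} (F : Finset (Fin d → ℤ)) (a : (Fin d → ℤ) → ℂ) (x : Torus d) : ℂ :=
  ∑ α ∈ F, a α * torusChar α x

/-- The set `ℕ₀^d` of multi-indices with nonnegative entries. -/
def NN (d : ℕ) : Set (Fin d → ℤ) := {α | ∀ j, 0 ≤ α j}

/-- `Λ` is a coset in `ℤ^d`, i.e. a translate of a subgroup. -/
def IsCoset {d : ℕ} (Λ : Set (Fin d → ℤ)) : Prop :=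
  ∃ (x : Fin d → ℤ) (H : AddSubgroup (Fin d → ℤ)),
    Λ = (x + ·) '' (H : Set (Fin d → ℤ))

/-- `Λ` is a contractive projection set for `L^p(𝕋^d)`:
the projection onto frequencies in `Λ` is contractive on trigonometric polynomials. -/
def IsContractiveLp (d : ℕ) (p : ℝ≥0∞) (Λ : Set (Fin d → ℤ)) : Prop :=
  ∀ (F : Finset (Fin d → ℤ)) (a : (Fin d → ℤ) → ℂ),
    eLpNorm (trigPoly (F.filter (· ∈ Λ)) a) p volume ≤ eLpNorm (trigPoly F a) p volume

/-- `Γ` is a contractive projection set for `H^p(𝕋^d)`: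
the projection onto frequencies in `Γ` is contractive on analytic polynomials. -/
def IsContractiveHp (d : ℕ) (p : ℝ≥0∞) (Γ : Set (Fin d → ℤ)) : Prop :=
  ∀ F : Finset (Fin d → ℤ), ↑F ⊆ NN d → ∀ a : (Fin d → ℤ) → ℂ,
    eLpNorm (trigPoly (F.filter (· ∈ Γ)) a) p volume ≤ eLpNorm (trigPoly F a) p volume

/-- `Γ` has dimension `k`: the subgroup generated by the differences `γ - γ₀` has rank `k`. -/
def HasDim {d : ℕ} (Γ : Set (Fin d → ℤ)) (k : ℕ) : Prop :=
  ∀ γ₀ ∈ Γ, Module.finrank ℤ (Submodule.span ℤ ((· - γ₀) '' Γ)) = k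

/-- `H^p(𝕋^d)` enjoys the contractive restriction property of dimension `k`:
every `k`-dimensional contractive projection set for `H^p(𝕋^d)` is the restriction
of a coset in `ℤ^d` to `ℕ₀^d`. -/
def ContractiveRestrictionProperty (d : ℕ) (p : ℝ≥0∞) (k : ℕ) : Prop :=
  ∀ Γ : Set (Fin d → ℤ), Γ.Nonempty → Γ ⊆ NN d → HasDim Γ k → IsContractiveHp d p Γ →
    ∃ Λ : Set (Fin d → ℤ), IsCoset Λ ∧ Γ = Λ ∩ NN d

/-- The coset `Λ(Γ)` in `ℤ^d` generated by `Γ`. -/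
def cosetGen {d : ℕ} (Γ : Set (Fin d → ℤ)) : Set (Fin d → ℤ) :=
  ⋃ γ₀ ∈ Γ, (γ₀ + ·) '' (AddSubgroup.closure ((· - γ₀) '' Γ) : Set (Fin d → ℤ))

/-- The `n`-extension `E_n(Γ)`: all points of `Λ(Γ) ∩ ℕ₀^d` at distance at most `n` from `Γ`. -/
def Eext {d : ℕ} (n : ℕ) (Γ : Set (Fin d → ℤ)) : Set (Fin d → ℤ) :=
  {lam | lam ∈ cosetGen Γ ∩ NN d ∧ ∃ γ ∈ Γ, ∃ m : (Fin d → ℤ) →₀ ℤ,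
    (↑m.support : Set (Fin d → ℤ)) ⊆ Γ \ {γ} ∧
    lam = γ + ∑ α ∈ m.support, m α • (α - γ) ∧
    (∑ α ∈ m.support, max (m α) 0) ≤ (n : ℤ) ∧
    (∑ α ∈ m.support, max (-(m α)) 0) ≤ (n : ℤ)}

/-- Iterated `n`-extensions `E_n^k(Γ)`. -/
def EextIter {d : ℕ} (n : ℕ) : ℕ → Set (Fin d → ℤ) → Set (Fin d → ℤ)
  | 0, Γ => Eext n Γ
  | (k + 1), Γ => Eext n (EextIter n k Γ)

/-- The `n`-completion `E_n^∞(Γ)`. -/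
def EextInf {d : ℕ} (n : ℕ) (Γ : Set (Fin d → ℤ)) : Set (Fin d → ℤ) :=
  ⋃ k, EextIter n k Γ

theorem mem_cosetGen_aux {Γ : Set (Fin 2 → ℤ)} {a b c : Fin 2 → ℤ}
    (ha : a ∈ Γ) (hb : b ∈ Γ) (hc : c ∈ Γ) : a + b - c ∈ cosetGen Γ := by
  unfold cosetGen
  simp only [Set.mem_iUnion]
  refine ⟨a, ha, (b - a) - (c - a), ?_, ?_⟩
  · exact AddSubgroup.sub_mem _ (AddSubgroup.subset_closure ⟨b, hb, rfl⟩)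
      (AddSubgroup.subset_closure ⟨c, hc, rfl⟩)
  · show a + ((b - a) - (c - a)) = a + b - c
    abel

theorem Eext_self {Γ : Set (Fin 2 → ℤ)} {a : Fin 2 → ℤ} (ha : a ∈ Γ) (hn : a ∈ NN 2) :
    a ∈ Eext 1 Γ := by
  refine ⟨⟨?_, hn⟩, a, ha, 0, ?_, ?_, ?_, ?_⟩
  · have := mem_cosetGen_aux ha ha ha
    simpa using this
  all_goals simp

theorem Eext_closed {Γ : Set (Fin 2 → ℤ)} {a b c : Fin 2 → ℤ}
    (ha : a ∈ Γ) (hb : b ∈ Γ) (hc : c ∈ Γ) (hn : a + b - c ∈ NN 2) :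
    a + b - c ∈ Eext 1 Γ := by
  by_cases hbc : b = c
  · subst hbc
    have e : a + b - b = a := by abel
    rw [e] at hn ⊢
    exact Eext_self ha hn
  by_cases hac : a = c
  · subst hac
    have e : a + b - a = b := by abel
    rw [e] at hn ⊢
    exact Eext_self hb hn
  refine ⟨⟨mem_cosetGen_aux ha hb hc, hn⟩, a, ha, ?_⟩
  by_cases hab : a = b
  · subst hab
    have hs : (Finsupp.single c (-1 : ℤ)).support = {c} :=
      Finsupp.support_single_ne_zero _ (by norm_num)
    refine ⟨Finsupp.single c (-1), ?_, ?_, ?_, ?_⟩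
    · rw [hs]
      simp only [Finset.coe_singleton, Set.singleton_subset_iff]
      exact ⟨hc, fun h => hac h.symm⟩
    · rw [hs]; simp; abel
    · rw [hs]; simp
    · rw [hs]; simp
  · have hs : (Finsupp.single b (1 : ℤ) + Finsupp.single c (-1 : ℤ)).support = {b, c} := by
      ext x
      simp only [Finsupp.mem_support_iff, Finsupp.add_apply, Finsupp.single_apply,
        Finset.mem_insert, Finset.mem_singleton]
      by_cases h1 : b = x
      · subst h1
        simp [Ne.symm hbc]
      · by_cases h2 : c = x
        · subst h2; simp [h1]
        · simp [h1, h2, Ne.symm h1, Ne.symm h2]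
    refine ⟨Finsupp.single b 1 + Finsupp.single c (-1), ?_, ?_, ?_, ?_⟩
    · rw [hs]
      intro x hx
      simp only [Finset.coe_insert, Finset.coe_singleton, Set.mem_insert_iff,
        Set.mem_singleton_iff] at hx
      rcases hx with rfl | rfl
      · exact ⟨hb, fun h => hab h.symm⟩
      · exact ⟨hc, fun h => hac h.symm⟩
    all_goals
      rw [hs, Finset.sum_pair hbc]
      simp [Finsupp.single_apply, hbc, Ne.symm hbc]
    abel

theorem EextIter_NN (k : ℕ) (Γ : Set (Fin 2 → ℤ)) : EextIter 1 k Γ ⊆ NN 2 := by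
  cases k <;> exact fun x hx => hx.1.2

theorem EextIter_mono (Γ : Set (Fin 2 → ℤ)) : Monotone (fun k => EextIter 1 k Γ) :=
  monotone_nat_of_le_succ fun k _ hx => Eext_self hx (EextIter_NN k Γ hx)

theorem EextInf_closed {Γ : Set (Fin 2 → ℤ)} {a b c : Fin 2 → ℤ}
    (ha : a ∈ EextInf 1 Γ) (hb : b ∈ EextInf 1 Γ) (hc : c ∈ EextInf 1 Γ)
    (hn : a + b - c ∈ NN 2) : a + b - c ∈ EextInf 1 Γ := by
  unfold EextInf at *
  rw [Set.mem_iUnion] at *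
  obtain ⟨i, hi⟩ := ha
  obtain ⟨j, hj⟩ := hb
  obtain ⟨k, hk⟩ := hc
  refine ⟨max i (max j k) + 1, ?_⟩
  have m := EextIter_mono Γ
  exact Eext_closed (m (by omega : i ≤ max i (max j k)) hi)
    (m (by omega : j ≤ max i (max j k)) hj) (m (by omega : k ≤ max i (max j k)) hk) hn

def PClosed (P : ℤ → ℤ → Prop) : Prop :=
  (∀ x y, P x y → 0 ≤ x ∧ 0 ≤ y) ∧
  ∀ x y x' y' x'' y'', P x y → P x' y' → P x'' y'' → 0 ≤ x + x' - x'' → 0 ≤ y + y' - y'' →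
    P (x + x' - x'') (y + y' - y'')

def PComp (P : ℤ → ℤ → Prop) : Prop :=
  ∃ x y u v, P x y ∧ P (x + u) (y + v) ∧ 0 ≤ u ∧ 0 ≤ v ∧ 0 < u + v

theorem comp_of {P : ℤ → ℤ → Prop} {x y x' y' : ℤ} (h : P x y) (h' : P x' y')
    (hx : x ≤ x') (hy : y ≤ y') (hne : x + y < x' + y') : PComp P :=
  ⟨x, y, x' - x, y' - y, h, by simpa using h', by omega, by omega, by omega⟩

theorem tri_comp {P : ℤ → ℤ → Prop} (hP : PClosed P) (n : ℕ) : ∀ x0 y0 x1 y1 x2 y2 : ℤ,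
    P x0 y0 → P x1 y1 → P x2 y2 → x0 < x1 → x1 < x2 → y1 < y0 → y2 < y1 →
    (x1 - x0) * (y2 - y0) ≠ (x2 - x0) * (y1 - y0) → x2 - x0 ≤ n → PComp P := by
  induction n with
  | zero => intros; omega
  | succ n ih =>
    intro x0 y0 x1 y1 x2 y2 h0 h1 h2 hx hx' hy hy' hd hn
    have n2 := hP.1 _ _ h2
    have n0 := hP.1 _ _ h0
    have h3 : P (x0 + x2 - x1) (y0 + y2 - y1) :=
      hP.2 _ _ _ _ _ _ h0 h2 h1 (by omega) (by omega)
    rcases lt_trichotomy x1 (x0 + x2 - x1) with hl | he | hl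
    · by_cases hc : y1 ≤ y0 + y2 - y1
      · exact comp_of h1 h3 hl.le hc (by omega)
      · refine ih _ _ _ _ _ _ h0 h1 h3 hx hl hy (by omega) ?_ (by push_cast at hn; omega)
        intro h; apply hd; linarith
    · rcases lt_trichotomy y1 (y0 + y2 - y1) with g | g | g
      · exact comp_of h1 h3 he.le g.le (by omega)
      · exfalso; apply hd
        have e1 : x2 = 2 * x1 - x0 := by omega
        have e2 : y2 = 2 * y1 - y0 := by omega
        subst e1 e2; ring
      · exact comp_of h3 h1 he.ge g.le (by omega)
    · by_cases hc : y0 + y2 - y1 ≤ y1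
      · exact comp_of h3 h1 hl.le hc (by omega)
      · refine ih _ _ _ _ _ _ h0 h3 h1 (by omega) hl (by omega) (by omega) ?_
          (by push_cast at hn; omega)
        intro h; apply hd; linarith

theorem three_comp {P : ℤ → ℤ → Prop} (hP : PClosed P) {x0 y0 x1 y1 x2 y2 : ℤ}
    (h0 : P x0 y0) (h1 : P x1 y1) (h2 : P x2 y2)
    (hd : (x1 - x0) * (y2 - y0) ≠ (x2 - x0) * (y1 - y0)) : PComp P := by
  have pair : ∀ {x y x' y' : ℤ}, P x y → P x' y' → (x ≠ x' ∨ y ≠ y') →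
      PComp P ∨ (x < x' ∧ y' < y) ∨ (x' < x ∧ y < y') := by
    intro x y x' y' h h' hne
    by_cases a : x ≤ x' ∧ y ≤ y'
    · exact Or.inl (comp_of h h' a.1 a.2 (by omega))
    by_cases b : x' ≤ x ∧ y' ≤ y
    · exact Or.inl (comp_of h' h b.1 b.2 (by omega))
    right; omega
  have n01 : x0 ≠ x1 ∨ y0 ≠ y1 := by
    by_contra! h; apply hd; rw [h.1, h.2]; ring
  have n02 : x0 ≠ x2 ∨ y0 ≠ y2 := by
    by_contra! h; apply hd; rw [h.1, h.2]; ring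
  have n12 : x1 ≠ x2 ∨ y1 ≠ y2 := by
    by_contra! h; apply hd; rw [h.1, h.2]
  rcases pair h0 h1 n01 with h | a
  · exact h
  rcases pair h0 h2 n02 with h | b
  · exact h
  rcases pair h1 h2 n12 with h | c
  · exact h
  have T := @tri_comp P hP
  rcases a with a | a <;> rcases b with b | b <;> rcases c with c | c
  · exact T (x2 - x0).toNat _ _ _ _ _ _ h0 h1 h2 (by omega) (by omega) (by omega) (by omega)
      (fun h => hd (by linarith)) (by omega)
  · exact T (x1 - x0).toNat _ _ _ _ _ _ h0 h2 h1 (by omega) (by omega) (by omega) (by omega)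
      (fun h => hd (by linarith)) (by omega)
  · omega
  · exact T (x1 - x2).toNat _ _ _ _ _ _ h2 h0 h1 (by omega) (by omega) (by omega) (by omega)
      (fun h => hd (by linarith)) (by omega)
  · exact T (x2 - x1).toNat _ _ _ _ _ _ h1 h0 h2 (by omega) (by omega) (by omega) (by omega)
      (fun h => hd (by linarith)) (by omega)
  · omega
  · exact T (x0 - x1).toNat _ _ _ _ _ _ h1 h2 h0 (by omega) (by omega) (by omega) (by omega)
      (fun h => hd (by linarith)) (by omega)
  · exact T (x0 - x2).toNat _ _ _ _ _ _ h2 h1 h0 (by omega) (by omega) (by omega) (by omega)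
      (fun h => hd (by linarith)) (by omega)

theorem horiz {P : ℤ → ℤ → Prop} (hP : PClosed P) {x y u p q p' q' a b : ℤ}
    (h : P x y) (h' : P (x + u) y) (hu : 0 < u) (hp : P p q) (hp' : P p' q') (hq : q < q')
    (hab : P a b) : ∃ c d, P c d ∧ a < c ∧ b < d := by
  have na := hP.1 _ _ hab
  have step : ∀ k : ℕ, P (a + k * u) b := by
    intro k
    induction k with
    | zero => simpa using hab
    | succ k ih =>
      have : 0 ≤ (k : ℤ) * u := by positivity
      have := hP.2 _ _ _ _ _ _ ih h' h (by linarith) (by linarith)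
      convert this using 1
      · push_cast; ring
      · ring
  have hk := step ((p - p').natAbs + 1)
  have hb : p - p' ≤ ((p - p').natAbs : ℤ) := by omega
  have hb0 : (0 : ℤ) ≤ ((p - p').natAbs : ℤ) := by omega
  have hbig : p - p' + 1 ≤ (((p - p').natAbs + 1 : ℕ) : ℤ) * u := by
    rw [Nat.cast_add, Nat.cast_one]; nlinarith
  refine ⟨_, _, hP.2 _ _ _ _ _ _ hk hp' hp (by linarith) (by linarith), by linarith, by linarith⟩

theorem planar {P : ℤ → ℤ → Prop} (hP : PClosed P) {x0 y0 x1 y1 x2 y2 a b : ℤ}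
    (h0 : P x0 y0) (h1 : P x1 y1) (h2 : P x2 y2)
    (hd : (x1 - x0) * (y2 - y0) ≠ (x2 - x0) * (y1 - y0)) (hab : P a b) :
    ∃ c d, P c d ∧ a < c ∧ b < d := by
  obtain ⟨x, y, u, v, h, h', hu, hv, huv⟩ := three_comp hP h0 h1 h2 hd
  have na := hP.1 _ _ hab
  rcases hv.eq_or_lt with rfl | hv
  · have ⟨p, q, p', q', hp, hp', hq⟩ : ∃ p q p' q', P p q ∧ P p' q' ∧ q < q' := by
      rcases lt_trichotomy y0 y1 with g | g | g
      · exact ⟨_, _, _, _, h0, h1, g⟩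
      · rcases lt_trichotomy y0 y2 with g' | g' | g'
        · exact ⟨_, _, _, _, h0, h2, g'⟩
        · exfalso; apply hd; rw [← g, ← g']; ring
        · exact ⟨_, _, _, _, h2, h0, g'⟩
      · exact ⟨_, _, _, _, h1, h0, g⟩
    exact horiz hP h (by simpa using h') (by omega) hp hp' hq hab
  rcases hu.eq_or_lt with rfl | hu
  · have ⟨p, q, p', q', hp, hp', hq⟩ : ∃ p q p' q', P p q ∧ P p' q' ∧ p < p' := by
      rcases lt_trichotomy x0 x1 with g | g | g
      · exact ⟨_, _, _, _, h0, h1, g⟩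
      · rcases lt_trichotomy x0 x2 with g' | g' | g'
        · exact ⟨_, _, _, _, h0, h2, g'⟩
        · exfalso; apply hd; rw [← g, ← g']; ring
        · exact ⟨_, _, _, _, h2, h0, g'⟩
      · exact ⟨_, _, _, _, h1, h0, g⟩
    have hQ : PClosed (fun s t => P t s) :=
      ⟨fun s t hs => (hP.1 _ _ hs).symm, fun _ _ _ _ _ _ r s t g g' => hP.2 _ _ _ _ _ _ r s t g' g⟩
    obtain ⟨c, d, hcd, g, g'⟩ := horiz (P := fun s t => P t s) hQ (x := y) (y := x) (u := v)
      h (by simpa using h') hv hp hp' hq hab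
    exact ⟨d, c, hcd, g', g⟩
  · exact ⟨_, _, hP.2 _ _ _ _ _ _ hab h' h (by linarith) (by linarith), by linarith, by linarith⟩

/-- For three affinely independent points in `ℕ₀²` and every `α ∈ T`, there is
`β ∈ E_1^∞(T)`, `β ≠ α`, with both coordinates of `β - α` positive. -/
theorem positive_point_dim_two (t₀ t₁ t₂ : Fin 2 → ℤ)
    (h₀ : t₀ ∈ NN 2) (h₁ : t₁ ∈ NN 2) (h₂ : t₂ ∈ NN 2)
    (hind : LinearIndependent ℚ
      ![fun j => ((t₁ - t₀) j : ℚ), fun j => ((t₂ - t₀) j : ℚ)]) :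
    ∀ α ∈ ({t₀, t₁, t₂} : Set (Fin 2 → ℤ)),
      ∃ β ∈ EextInf 1 ({t₀, t₁, t₂} : Set (Fin 2 → ℤ)),
        β ≠ α ∧ ∀ j, 0 < (β - α) j := by
  intro α hα
  set T : Set (Fin 2 → ℤ) := {t₀, t₁, t₂} with hT
  have hTN : T ⊆ NN 2 := by
    rintro x (rfl | rfl | rfl) <;> assumption
  have hTE : ∀ x ∈ T, x ∈ EextInf 1 T := fun x hx =>
    Set.mem_iUnion.2 ⟨0, Eext_self hx (hTN hx)⟩
  have eta : ∀ x : Fin 2 → ℤ, ![x 0, x 1] = x := by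
    intro x; ext j; fin_cases j <;> rfl
  have hP : PClosed (fun x y => ![x, y] ∈ EextInf 1 T) := by
    constructor
    · intro x y h
      obtain ⟨k, hk⟩ := Set.mem_iUnion.1 h
      have := EextIter_NN k T hk
      exact ⟨this 0, this 1⟩
    · intro x y x' y' x'' y'' h h' h'' g g'
      have e : ![x + x' - x'', y + y' - y''] = ![x, y] + ![x', y'] - ![x'', y''] := by
        ext j; fin_cases j <;> simp
      show ![x + x' - x'', y + y' - y''] ∈ _
      rw [e]
      apply EextInf_closed h h' h''
      rw [← e]
      intro j; fin_cases j
      · exact g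
      · exact g'
  have hm : ∀ x ∈ T, ![x 0, x 1] ∈ EextInf 1 T := fun x hx => by rw [eta]; exact hTE x hx
  have hd : (t₁ 0 - t₀ 0) * (t₂ 1 - t₀ 1) ≠ (t₂ 0 - t₀ 0) * (t₁ 1 - t₀ 1) := by
    intro h
    have hq : ((t₁ 0 : ℚ) - t₀ 0) * (t₂ 1 - t₀ 1) = (t₂ 0 - t₀ 0) * (t₁ 1 - t₀ 1) := by
      exact_mod_cast h
    rw [LinearIndependent.pair_iff] at hind
    have A := hind ((t₂ 0 : ℚ) - t₀ 0) (-((t₁ 0 : ℚ) - t₀ 0)) (by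
      ext j; fin_cases j
      · simp; ring
      · simp; linarith)
    have B := hind ((t₂ 1 : ℚ) - t₀ 1) (-((t₁ 1 : ℚ) - t₀ 1)) (by
      ext j; fin_cases j
      · simp; linarith
      · simp; ring)
    have C := hind 1 0 (by
      ext j; fin_cases j
      · simp; linarith [A.2]
      · simp; linarith [B.2])
    exact one_ne_zero C.1
  obtain ⟨c, d, hcd, hc, hd'⟩ := planar hP (hm t₀ (by simp [hT])) (hm t₁ (by simp [hT]))
    (hm t₂ (by simp [hT])) hd (hm α hα)
  refine ⟨![c, d], hcd, ?_, ?_⟩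
  · intro h
    have := congrFun h 0
    simp at this
    omega
  · intro j; fin_cases j
    · simpa using hc
    · simpa using hd'

end
end

section
/- Let Γ := {(3,0,0), (0,3,0), (1,1,1)} ⊆ ℕ_0^3. Then E_1(Γ) = Γ, while E_2(Γ) = Λ(Γ) ∩ ℕ_0^3 = Γ ∪ {(0,0,3)}. -/
open MeasureTheory
open scoped Classical ENNReal

noncomputable section

/-- A point of `Γ ∩ ℕ₀^d` belongs to every extension. -/
lemma mem_Eext_self {d : ℕ} (n : ℕ) (Γ : Set (Fin d → ℤ)) (x : Fin d → ℤ) (hx : x ∈ Γ)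
    (hN : x ∈ NN d) : x ∈ Eext n Γ := by
  refine ⟨⟨?_, hN⟩, x, hx, 0, by simp, by simp, by simp, by simp⟩
  simp only [cosetGen, Set.mem_iUnion]
  exact ⟨x, hx, 0, AddSubgroup.zero_mem _, by simp⟩

/-- The subgroup containing all the differences. -/
def diffGroup : AddSubgroup (Fin 3 → ℤ) where
  carrier := {v | v 0 + v 1 + v 2 = 0 ∧ (3 : ℤ) ∣ v 0 - v 1 ∧ (3 : ℤ) ∣ v 1 - v 2}
  zero_mem' := by simp
  add_mem' := by
    rintro a b ⟨h1, h2, h3⟩ ⟨k1, k2, k3⟩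
    simp only [Set.mem_setOf_eq, Pi.add_apply]
    omega
  neg_mem' := by
    rintro a ⟨h1, h2, h3⟩
    simp only [Set.mem_setOf_eq, Pi.neg_apply]
    omega

lemma coset_subset : cosetGen ({![3,0,0], ![0,3,0], ![1,1,1]} : Set (Fin 3 → ℤ)) ∩ NN 3
    ⊆ ({![3,0,0], ![0,3,0], ![1,1,1], ![0,0,3]} : Set (Fin 3 → ℤ)) := by
  rintro x ⟨hx, hN⟩
  simp only [cosetGen, Set.mem_iUnion] at hx
  obtain ⟨g, hg, v, hv, rfl⟩ := hx
  have hle : AddSubgroup.closure ((· - g) ''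
      ({![3,0,0], ![0,3,0], ![1,1,1]} : Set (Fin 3 → ℤ))) ≤ diffGroup := by
    rw [AddSubgroup.closure_le]
    rintro _ ⟨y, hy, rfl⟩
    change _ ∧ _ ∧ _
    simp only [Set.mem_insert_iff, Set.mem_singleton_iff] at hy hg
    rcases hy with rfl | rfl | rfl <;> rcases hg with rfl | rfl | rfl <;> simp
  obtain ⟨h1, h2, h3⟩ := hle hv
  have n0 := hN 0
  have n1 := hN 1
  have n2 := hN 2
  simp only [Set.mem_insert_iff, Set.mem_singleton_iff] at hg ⊢
  simp only [funext_iff, Fin.forall_fin_succ, IsEmpty.forall_iff]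
  rcases hg with rfl | rfl | rfl <;> simp at n0 n1 n2 ⊢ <;> omega

lemma sum_pair_support {M : Type*} [AddCommMonoid M] (m : (Fin 3 → ℤ) →₀ ℤ)
    (p q : Fin 3 → ℤ) (hpq : p ≠ q) (h : ∀ x, m x ≠ 0 → x = p ∨ x = q)
    (f : (Fin 3 → ℤ) → M) (hf : ∀ x, m x = 0 → f x = 0) :
    ∑ x ∈ m.support, f x = f p + f q := by
  rw [← Finset.sum_pair hpq]
  apply Finset.sum_subset
  · intro x hx
    simpa using h x (by simpa using hx)
  · intro x _ hx
    exact hf x (by simpa using hx)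

/-- Explicit description of the representation once the two other points are named. -/
lemma rep_pair (n : ℤ) (g p q lam : Fin 3 → ℤ) (hpq : p ≠ q) (m : (Fin 3 → ℤ) →₀ ℤ)
    (h : ∀ x, m x ≠ 0 → x = p ∨ x = q)
    (hl : lam = g + ∑ α ∈ m.support, m α • (α - g))
    (h1 : (∑ α ∈ m.support, max (m α) 0) ≤ n)
    (h2 : (∑ α ∈ m.support, max (-(m α)) 0) ≤ n) :
    ∃ s t : ℤ, (∀ i, lam i = g i + (s * (p i - g i) + t * (q i - g i))) ∧
      max s 0 + max t 0 ≤ n ∧ max (-s) 0 + max (-t) 0 ≤ n := by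
  rw [sum_pair_support m p q hpq h _ (by intro x hx; simp [hx])] at hl h1 h2
  exact ⟨m p, m q, fun i => by simp [hl], h1, h2⟩

lemma not_mem_one :
    ![0,0,3] ∉ Eext 1 ({![3,0,0], ![0,3,0], ![1,1,1]} : Set (Fin 3 → ℤ)) := by
  rintro ⟨_, g, hg, m, hm, hl, h1, h2⟩
  have key : ∀ x, m x ≠ 0 → (x = ![3,0,0] ∨ x = ![0,3,0] ∨ x = ![1,1,1]) ∧ x ≠ g := by
    intro x hx
    simpa using hm (by simpa using hx : x ∈ (↑m.support : Set (Fin 3 → ℤ)))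
  simp only [Set.mem_insert_iff, Set.mem_singleton_iff] at hg
  rcases hg with rfl | rfl | rfl
  · obtain ⟨s, t, h, k1, k2⟩ := rep_pair _ _ ![0,3,0] ![1,1,1] _ (by decide) m
      (fun x hx => by have := key x hx; tauto) hl h1 h2
    have := h 0; have := h 1; have := h 2
    simp at *
    omega
  · obtain ⟨s, t, h, k1, k2⟩ := rep_pair _ _ ![3,0,0] ![1,1,1] _ (by decide) m
      (fun x hx => by have := key x hx; tauto) hl h1 h2
    have := h 0; have := h 1; have := h 2
    simp at *
    omega
  · obtain ⟨s, t, h, k1, k2⟩ := rep_pair _ _ ![3,0,0] ![0,3,0] _ (by decide) m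
      (fun x hx => by have := key x hx; tauto) hl h1 h2
    have := h 0; have := h 1; have := h 2
    simp at *
    omega

lemma mem_two :
    ![0,0,3] ∈ Eext 2 ({![3,0,0], ![0,3,0], ![1,1,1]} : Set (Fin 3 → ℤ)) := by
  refine ⟨⟨?_, ?_⟩, ![1,1,1], by simp,
    Finsupp.single ![3,0,0] (-1) + Finsupp.single ![0,3,0] (-1), ?_⟩
  · simp only [cosetGen, Set.mem_iUnion]
    refine ⟨![1,1,1], by simp, -(![3,0,0] - ![1,1,1]) + -(![0,3,0] - ![1,1,1]), ?_, by decide⟩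
    refine AddSubgroup.add_mem _ (AddSubgroup.neg_mem _ (AddSubgroup.subset_closure ?_))
      (AddSubgroup.neg_mem _ (AddSubgroup.subset_closure ?_))
    · exact ⟨![3,0,0], by simp, rfl⟩
    · exact ⟨![0,3,0], by simp, rfl⟩
  · intro j
    fin_cases j <;> simp
  · have hne : (![3,0,0] : Fin 3 → ℤ) ≠ ![0,3,0] := by decide
    set m : (Fin 3 → ℤ) →₀ ℤ :=
      Finsupp.single ![3,0,0] (-1) + Finsupp.single ![0,3,0] (-1) with hmdef
    have hs : ∀ x, m x ≠ 0 → x = ![3,0,0] ∨ x = ![0,3,0] := by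
      intro x hx
      by_contra hc
      push Not at hc
      exact hx (by rw [hmdef, Finsupp.add_apply, Finsupp.single_eq_of_ne hc.1,
        Finsupp.single_eq_of_ne hc.2, add_zero])
    have e1 : m ![3,0,0] = -1 := by
      rw [hmdef, Finsupp.add_apply, Finsupp.single_eq_same, Finsupp.single_eq_of_ne hne, add_zero]
    have e2 : m ![0,3,0] = -1 := by
      rw [hmdef, Finsupp.add_apply, Finsupp.single_eq_same, Finsupp.single_eq_of_ne hne.symm,
        zero_add]
    refine ⟨?_, ?_, ?_, ?_⟩
    · intro x hx
      rcases hs x (by simpa using hx) with rfl | rfl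
      · exact ⟨by simp, by rw [Set.mem_singleton_iff]; decide⟩
      · exact ⟨by simp, by rw [Set.mem_singleton_iff]; decide⟩
    · rw [sum_pair_support m _ _ hne hs _ (by intro x hx; simp [hx]), e1, e2]
      decide
    · rw [sum_pair_support m _ _ hne hs _ (by intro x hx; simp [hx]), e1, e2]
      decide
    · rw [sum_pair_support m _ _ hne hs _ (by intro x hx; simp [hx]), e1, e2]
      decide

lemma gamma_sub (n : ℕ) : ({![3,0,0], ![0,3,0], ![1,1,1]} : Set (Fin 3 → ℤ)) ⊆
    Eext n ({![3,0,0], ![0,3,0], ![1,1,1]} : Set (Fin 3 → ℤ)) := by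
  intro x hx
  refine mem_Eext_self n _ x hx ?_
  simp only [Set.mem_insert_iff, Set.mem_singleton_iff] at hx
  rcases hx with rfl | rfl | rfl <;> intro j <;> fin_cases j <;> simp

/-- Example: for `Γ = {(3,0,0), (0,3,0), (1,1,1)}` one has `E_1(Γ) = Γ` while
`E_2(Γ) = Λ(Γ) ∩ ℕ₀³ = Γ ∪ {(0,0,3)}`. -/
theorem example_dimension_three :
    Eext 1 ({![3,0,0], ![0,3,0], ![1,1,1]} : Set (Fin 3 → ℤ))
      = ({![3,0,0], ![0,3,0], ![1,1,1]} : Set (Fin 3 → ℤ)) ∧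
    Eext 2 ({![3,0,0], ![0,3,0], ![1,1,1]} : Set (Fin 3 → ℤ))
      = cosetGen ({![3,0,0], ![0,3,0], ![1,1,1]} : Set (Fin 3 → ℤ)) ∩ NN 3 ∧
    Eext 2 ({![3,0,0], ![0,3,0], ![1,1,1]} : Set (Fin 3 → ℤ))
      = ({![3,0,0], ![0,3,0], ![1,1,1], ![0,0,3]} : Set (Fin 3 → ℤ)) := by
  have four : ({![3,0,0], ![0,3,0], ![1,1,1], ![0,0,3]} : Set (Fin 3 → ℤ)) ⊆
      Eext 2 ({![3,0,0], ![0,3,0], ![1,1,1]} : Set (Fin 3 → ℤ)) := by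
    rintro x (rfl | rfl | rfl | rfl)
    · exact gamma_sub 2 (by simp)
    · exact gamma_sub 2 (by simp)
    · exact gamma_sub 2 (by simp)
    · exact mem_two
  refine ⟨Set.Subset.antisymm ?_ (gamma_sub 1), Set.Subset.antisymm (fun x hx => hx.1)
    (fun x hx => four (coset_subset hx)),
    Set.Subset.antisymm (fun x hx => coset_subset hx.1) four⟩
  intro x hx
  have h4 := coset_subset hx.1
  simp only [Set.mem_insert_iff, Set.mem_singleton_iff] at h4 ⊢
  rcases h4 with h | h | h | h
  · exact Or.inl h
  · exact Or.inr (Or.inl h)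
  · exact Or.inr (Or.inr h)
  · subst h
    exact absurd hx not_mem_one


end
end

section
/- Fix an integer n ≥ 2 and let Γ_n := {(n,1,0,1), (n+1,0,1,0), (0,0,n+1,0), (0,0,0,n+1)} ⊆ ℕ_0^4. Then E_n(Γ_n) = Γ_n, while E_{n+1}(Γ_n) = Λ(Γ_n) ∩ ℕ_0^4 = Γ_n ∪ {(0,n+1,1,0)}. -/
open MeasureTheory
open scoped Classical ENNReal

noncomputable section

/-- The set `Γ_n = {(n,1,0,1), (n+1,0,1,0), (0,0,n+1,0), (0,0,0,n+1)}` of Example 4.3. -/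
def GammaFour (n : ℕ) : Set (Fin 4 → ℤ) :=
  {![(n : ℤ), 1, 0, 1], ![(n : ℤ) + 1, 0, 1, 0],
    ![0, 0, (n : ℤ) + 1, 0], ![0, 0, 0, (n : ℤ) + 1]}

lemma key_sol (n : ℕ) (hn : 2 ≤ n) (x y z w : ℤ) (hs : x + y + z + w = 1)
    (h0 : 0 ≤ n * x + (n + 1) * y) (h1 : 0 ≤ x) (h2 : 0 ≤ y + (n + 1) * z)
    (h3 : 0 ≤ x + (n + 1) * w) :
    (x = 1 ∧ y = 0 ∧ z = 0 ∧ w = 0) ∨ (x = 0 ∧ y = 1 ∧ z = 0 ∧ w = 0) ∨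
    (x = 0 ∧ y = 0 ∧ z = 1 ∧ w = 0) ∨ (x = 0 ∧ y = 0 ∧ z = 0 ∧ w = 1) ∨
    (x = n + 1 ∧ y = -n ∧ z = 1 ∧ w = -1) := by
  have hN2 : (2 : ℤ) ≤ n := by omega
  clear hn
  generalize (n : ℤ) = N at *
  obtain rfl : y = 1 - x - z - w := by omega
  have hzw : z + w ≤ 1 := by
    by_contra h
    push Not at h
    nlinarith
  rcases h1.eq_or_lt with rfl | hx
  · have hw : 0 ≤ w := by
      by_contra h
      push Not at h
      nlinarith
    have hz : 0 ≤ z := by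
      by_contra h
      push Not at h
      nlinarith
    omega
  · have hzw0 : z + w ≤ 0 := by
      by_contra h
      push Not at h
      nlinarith
    have e1 : (N + 1) * w ≤ 1 - x := by nlinarith
    have e2 : (N + 1) * w = -x ∨ (N + 1) * w = 1 - x := by
      have : -x ≤ (N + 1) * w := by linarith
      omega
    rcases e2 with e | e
    · have hx : x = -((N + 1) * w) := by linarith
      subst hx
      have hz1 : z ≤ 1 := by
        by_contra h
        push Not at h
        nlinarith
      have hzk : -w ≤ z := by
        by_contra h
        push Not at h
        nlinarith
      have hw : w < 0 := by
        by_contra h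
        push Not at h
        nlinarith
      obtain rfl : w = -1 := by omega
      obtain rfl : z = 1 := by omega
      right; right; right; right
      refine ⟨by ring, by ring, rfl, rfl⟩
    · have hx : x = 1 - (N + 1) * w := by linarith
      subst hx
      have hzk : -w ≤ z := by
        by_contra h
        push Not at h
        nlinarith
      obtain rfl : z = -w := by omega
      have hw : w = 0 := by
        apply le_antisymm
        · by_contra h
          push Not at h
          nlinarith
        · by_contra h
          push Not at h
          nlinarith
      subst hw
      simp

lemma coset_comb (n : ℕ) (v : Fin 4 → ℤ) (hv : v ∈ cosetGen (GammaFour n)) :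
    ∃ x y z w : ℤ, x + y + z + w = 1 ∧
      v 0 = n * x + (n + 1) * y ∧ v 1 = x ∧ v 2 = y + (n + 1) * z ∧
      v 3 = x + (n + 1) * w := by
  have hG : ∀ u ∈ GammaFour n, ∃ x y z w : ℤ, x + y + z + w = 1 ∧
      u 0 = n * x + (n + 1) * y ∧ u 1 = x ∧ u 2 = y + (n + 1) * z ∧
      u 3 = x + (n + 1) * w := by
    intro u hu
    simp only [GammaFour, Set.mem_insert_iff, Set.mem_singleton_iff] at hu
    rcases hu with rfl | rfl | rfl | rfl
    · exact ⟨1, 0, 0, 0, by simp⟩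
    · exact ⟨0, 1, 0, 0, by simp⟩
    · exact ⟨0, 0, 1, 0, by simp⟩
    · exact ⟨0, 0, 0, 1, by simp⟩
  simp only [cosetGen, Set.mem_iUnion, Set.mem_image, SetLike.mem_coe] at hv
  obtain ⟨g, hg, h, hh, rfl⟩ := hv
  have hH : ∃ x y z w : ℤ, x + y + z + w = 0 ∧
      h 0 = n * x + (n + 1) * y ∧ h 1 = x ∧ h 2 = y + (n + 1) * z ∧
      h 3 = x + (n + 1) * w := by
    induction hh using AddSubgroup.closure_induction with
    | mem u hu =>
      obtain ⟨t, ht, rfl⟩ := hu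
      obtain ⟨x, y, z, w, s, p0, p1, p2, p3⟩ := hG t ht
      obtain ⟨x', y', z', w', s', p0', p1', p2', p3'⟩ := hG g hg
      refine ⟨x - x', y - y', z - z', w - w', by omega, ?_, ?_, ?_, ?_⟩ <;>
        simp only [Pi.sub_apply, *] <;> ring
    | zero => exact ⟨0, 0, 0, 0, by simp⟩
    | add u t _ _ h1 h2 =>
      obtain ⟨x, y, z, w, s, p0, p1, p2, p3⟩ := h1
      obtain ⟨x', y', z', w', s', p0', p1', p2', p3'⟩ := h2
      refine ⟨x + x', y + y', z + z', w + w', by omega, ?_, ?_, ?_, ?_⟩ <;>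
        simp only [Pi.add_apply, *] <;> ring
    | neg u _ h1 =>
      obtain ⟨x, y, z, w, s, p0, p1, p2, p3⟩ := h1
      refine ⟨-x, -y, -z, -w, by omega, ?_, ?_, ?_, ?_⟩ <;>
        simp only [Pi.neg_apply, *] <;> ring
  obtain ⟨x, y, z, w, s, p0, p1, p2, p3⟩ := hH
  obtain ⟨x', y', z', w', s', p0', p1', p2', p3'⟩ := hG g hg
  refine ⟨x + x', y + y', z + z', w + w', by omega, ?_, ?_, ?_, ?_⟩ <;>
    simp only [Pi.add_apply, *] <;> ring

lemma coset_sub (n : ℕ) (hn : 2 ≤ n) :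
    cosetGen (GammaFour n) ∩ NN 4 ⊆ GammaFour n ∪ {![0, (n : ℤ) + 1, 1, 0]} := by
  rintro v ⟨hv, hp⟩
  obtain ⟨x, y, z, w, s, p0, p1, p2, p3⟩ := coset_comb n v hv
  have q0 := hp 0
  have q1 := hp 1
  have q2 := hp 2
  have q3 := hp 3
  have hvv : v = ![v 0, v 1, v 2, v 3] := by
    ext i; fin_cases i <;> rfl
  rw [hvv, p0, p1, p2, p3]
  rw [p0] at q0
  rw [p1] at q1
  rw [p2] at q2
  rw [p3] at q3
  simp only [GammaFour, Set.mem_union, Set.mem_insert_iff, Set.mem_singleton_iff]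
  rcases key_sol n hn x y z w s q0 q1 q2 q3 with
    ⟨rfl, rfl, rfl, rfl⟩ | ⟨rfl, rfl, rfl, rfl⟩ | ⟨rfl, rfl, rfl, rfl⟩ | ⟨rfl, rfl, rfl, rfl⟩ |
    ⟨rfl, rfl, rfl, rfl⟩
  · simp
  · simp
  · simp
  · simp
  · right
    ext i; fin_cases i <;> simp <;> ring

lemma gamma_distinct (n : ℕ) :
    (![(n : ℤ), 1, 0, 1] : Fin 4 → ℤ) ≠ ![(n : ℤ) + 1, 0, 1, 0] ∧
    (![(n : ℤ), 1, 0, 1] : Fin 4 → ℤ) ≠ ![0, 0, (n : ℤ) + 1, 0] ∧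
    (![(n : ℤ), 1, 0, 1] : Fin 4 → ℤ) ≠ ![0, 0, 0, (n : ℤ) + 1] ∧
    (![(n : ℤ) + 1, 0, 1, 0] : Fin 4 → ℤ) ≠ ![0, 0, (n : ℤ) + 1, 0] ∧
    (![(n : ℤ) + 1, 0, 1, 0] : Fin 4 → ℤ) ≠ ![0, 0, 0, (n : ℤ) + 1] ∧
    (![0, 0, (n : ℤ) + 1, 0] : Fin 4 → ℤ) ≠ ![0, 0, 0, (n : ℤ) + 1] := by
  refine ⟨?_, ?_, ?_, ?_, ?_, ?_⟩ <;> intro h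
  · simpa using congrFun h 1
  · simpa using congrFun h 1
  · simpa using congrFun h 1
  · have := congrFun h 0
    simp at this
    omega
  · simpa using congrFun h 2
  · have := congrFun h 2
    simp at this
    omega

lemma sum_gamma {M : Type*} [AddCommMonoid M] (n : ℕ) (m : (Fin 4 → ℤ) →₀ ℤ)
    (hm : (↑m.support : Set (Fin 4 → ℤ)) ⊆ GammaFour n) (f : (Fin 4 → ℤ) → M)
    (hf : ∀ α, m α = 0 → f α = 0) :
    ∑ α ∈ m.support, f α = f ![(n : ℤ), 1, 0, 1] + (f ![(n : ℤ) + 1, 0, 1, 0] +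
      (f ![0, 0, (n : ℤ) + 1, 0] + f ![0, 0, 0, (n : ℤ) + 1])) := by
  obtain ⟨h1, h2, h3, h4, h5, h6⟩ := gamma_distinct n
  rw [Finset.sum_subset (s₂ := {![(n : ℤ), 1, 0, 1], ![(n : ℤ) + 1, 0, 1, 0],
    ![0, 0, (n : ℤ) + 1, 0], ![0, 0, 0, (n : ℤ) + 1]})]
  · rw [Finset.sum_insert (by simp only [Finset.mem_insert, Finset.mem_singleton]; tauto),
      Finset.sum_insert (by simp only [Finset.mem_insert, Finset.mem_singleton]; tauto),
      Finset.sum_insert (by simp only [Finset.mem_singleton]; tauto),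
      Finset.sum_singleton]
  · intro α hα
    have := hm hα
    simpa only [GammaFour, Set.mem_insert_iff, Set.mem_singleton_iff, Finset.mem_insert,
      Finset.mem_singleton] using this
  · intro α _ hα
    exact hf α (by simpa using hα)

lemma mem_cosetGen_of_rep {d : ℕ} (Γ : Set (Fin d → ℤ)) (γ : Fin d → ℤ) (hγ : γ ∈ Γ)
    (m : (Fin d → ℤ) →₀ ℤ) (hm : (↑m.support : Set (Fin d → ℤ)) ⊆ Γ) :
    γ + ∑ α ∈ m.support, m α • (α - γ) ∈ cosetGen Γ := by
  simp only [cosetGen, Set.mem_iUnion, Set.mem_image, SetLike.mem_coe]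
  refine ⟨γ, hγ, _, ?_, rfl⟩
  refine AddSubgroup.sum_mem _ fun α hα => AddSubgroup.zsmul_mem _ ?_ _
  exact AddSubgroup.subset_closure ⟨α, hm hα, rfl⟩

lemma gamma_sub_NN (n : ℕ) : GammaFour n ⊆ NN 4 := by
  intro v hv
  simp only [GammaFour, Set.mem_insert_iff, Set.mem_singleton_iff] at hv
  rcases hv with rfl | rfl | rfl | rfl <;> intro j <;> fin_cases j <;> simp <;> omega

lemma gamma_sub_Eext (n k : ℕ) : GammaFour n ⊆ Eext k (GammaFour n) := by
  intro v hv
  refine ⟨⟨?_, gamma_sub_NN n hv⟩, v, hv, 0, by simp, by simp, by simp, by simp⟩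
  simpa using mem_cosetGen_of_rep (GammaFour n) v hv 0 (by simp)

lemma extra_mem (n : ℕ) : ![0, (n : ℤ) + 1, 1, 0] ∈ Eext (n + 1) (GammaFour n) := by
  obtain ⟨h1, h2, h3, h4, h5, h6⟩ := gamma_distinct n
  have hc : ![0, 0, (n : ℤ) + 1, 0] ∈ GammaFour n := by simp [GammaFour]
  let m : (Fin 4 → ℤ) →₀ ℤ := Finsupp.onFinset
    {![(n : ℤ), 1, 0, 1], ![(n : ℤ) + 1, 0, 1, 0], ![0, 0, 0, (n : ℤ) + 1]}
    (fun α => if α = ![(n : ℤ), 1, 0, 1] then (n : ℤ) + 1 else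
      if α = ![(n : ℤ) + 1, 0, 1, 0] then -(n : ℤ) else
      if α = ![0, 0, 0, (n : ℤ) + 1] then -1 else 0)
    (by
      intro α hα
      simp only [Finset.mem_insert, Finset.mem_singleton]
      by_contra hcon
      push Not at hcon
      apply hα
      rw [if_neg hcon.1, if_neg hcon.2.1, if_neg hcon.2.2])
  have ma : m ![(n : ℤ), 1, 0, 1] = n + 1 := if_pos rfl
  have mb : m ![(n : ℤ) + 1, 0, 1, 0] = -n := (if_neg h1.symm).trans (if_pos rfl)
  have mc : m ![0, 0, (n : ℤ) + 1, 0] = 0 :=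
    (if_neg h2.symm).trans ((if_neg h4.symm).trans (if_neg h6))
  have md : m ![0, 0, 0, (n : ℤ) + 1] = -1 :=
    (if_neg h3.symm).trans ((if_neg h5.symm).trans (if_pos rfl))
  have hm : (↑m.support : Set (Fin 4 → ℤ)) ⊆ GammaFour n \ {![0, 0, (n : ℤ) + 1, 0]} := by
    intro α hα
    have h := Finsupp.support_onFinset_subset hα
    simp only [Finset.mem_insert, Finset.mem_singleton] at h
    simp only [GammaFour, Set.mem_diff, Set.mem_insert_iff, Set.mem_singleton_iff]
    rcases h with rfl | rfl | rfl
    · exact ⟨by tauto, h2⟩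
    · exact ⟨by tauto, h4⟩
    · exact ⟨by tauto, h6.symm⟩
  have hm' := hm.trans Set.diff_subset
  have hrep : ![0, (n : ℤ) + 1, 1, 0] = ![0, 0, (n : ℤ) + 1, 0] +
      ∑ α ∈ m.support, m α • (α - ![0, 0, (n : ℤ) + 1, 0]) := by
    rw [sum_gamma n m hm' _ (by intro α h; rw [h, zero_smul]), ma, mb, mc, md]
    ext i; fin_cases i <;> simp <;> ring
  refine ⟨⟨?_, ?_⟩, _, hc, m, hm, hrep, ?_, ?_⟩
  · rw [hrep]
    exact mem_cosetGen_of_rep _ _ hc m hm'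
  · intro j; fin_cases j <;> simp; omega
  · rw [sum_gamma n m hm' _ (by intro α h; rw [h]; rfl), ma, mb, mc, md]
    push_cast; omega
  · rw [sum_gamma n m hm' _ (by intro α h; rw [h]; rfl), ma, mb, mc, md]
    push_cast; omega

lemma extra_not_mem (n : ℕ) (hn : 2 ≤ n) :
    ![0, (n : ℤ) + 1, 1, 0] ∉ Eext n (GammaFour n) := by
  rintro ⟨-, γ, hγ, m, hm, hrep, hpos, hneg⟩
  have hm' := hm.trans Set.diff_subset
  have hγ0 : m γ = 0 := by
    by_contra h
    exact (hm (Finsupp.mem_support_iff.mpr h)).2 rfl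
  rw [sum_gamma n m hm' _ (by intro α h; rw [h, zero_smul])] at hrep
  rw [sum_gamma n m hm' _ (by intro α h; rw [h]; rfl)] at hpos hneg
  have e0 := congrFun hrep 0
  have e1 := congrFun hrep 1
  have e2 := congrFun hrep 2
  have e3 := congrFun hrep 3
  clear hrep hm hm'
  simp only [GammaFour, Set.mem_insert_iff, Set.mem_singleton_iff] at hγ
  generalize hA : m ![(n : ℤ), 1, 0, 1] = A at *
  generalize hB : m ![(n : ℤ) + 1, 0, 1, 0] = B at *
  generalize hC : m ![0, 0, (n : ℤ) + 1, 0] = C at *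
  generalize hD : m ![0, 0, 0, (n : ℤ) + 1] = D at *
  have hsol : ∀ x y z w : ℤ, x + y + z + w = 1 → (0 : ℤ) = n * x + (n + 1) * y → n + 1 = x →
      1 = y + (n + 1) * z → 0 = x + (n + 1) * w →
      x = n + 1 ∧ y = -n ∧ z = 1 ∧ w = -1 := by
    intro x y z w hs f0 f1 f2 f3
    have := key_sol n hn x y z w hs f0.le (by omega) (by omega) f3.le
    omega
  rcases hγ with rfl | rfl | rfl | rfl
  · rw [hA] at hγ0
    subst hγ0
    simp at e0 e1 e2 e3
    have := hsol (1 - B - C - D) B C D (by ring) (by linarith) (by linarith) (by linarith)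
      (by linarith)
    omega
  · rw [hB] at hγ0
    subst hγ0
    simp at e0 e1 e2 e3
    have := hsol A (1 - A - C - D) C D (by ring) (by linarith) (by linarith) (by linarith)
      (by linarith)
    omega
  · rw [hC] at hγ0
    subst hγ0
    simp at e0 e1 e2 e3
    have := hsol A B (1 - A - B - D) D (by ring) (by linarith) (by linarith) (by linarith)
      (by linarith)
    omega
  · rw [hD] at hγ0
    subst hγ0
    simp at e0 e1 e2 e3
    have := hsol A B C (1 - A - B - C) (by ring) (by linarith) (by linarith) (by linarith)
      (by linarith)
    omega

/-- Example: for `n ≥ 2`, `E_n(Γ_n) = Γ_n` while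
`E_{n+1}(Γ_n) = Λ(Γ_n) ∩ ℕ₀⁴ = Γ_n ∪ {(0,n+1,1,0)}`. -/
theorem example_dimension_four (n : ℕ) (hn : 2 ≤ n) :
    Eext n (GammaFour n) = GammaFour n ∧
    Eext (n + 1) (GammaFour n) = cosetGen (GammaFour n) ∩ NN 4 ∧
    Eext (n + 1) (GammaFour n) = GammaFour n ∪ {![0, (n : ℤ) + 1, 1, 0]} := by
  have hsub : GammaFour n ∪ {![0, (n : ℤ) + 1, 1, 0]} ⊆ Eext (n + 1) (GammaFour n) := by
    rintro v (hv | rfl)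
    · exact gamma_sub_Eext n _ hv
    · exact extra_mem n
  have hE : ∀ k, Eext k (GammaFour n) ⊆ cosetGen (GammaFour n) ∩ NN 4 := fun k v hv => hv.1
  refine ⟨?_, ?_, ?_⟩
  · refine Set.Subset.antisymm ?_ (gamma_sub_Eext n n)
    intro v hv
    rcases coset_sub n hn (hE n hv) with h | rfl
    · exact h
    · exact absurd hv (extra_not_mem n hn)
  · exact Set.Subset.antisymm (hE _) ((coset_sub n hn).trans hsub)
  · exact Set.Subset.antisymm ((hE _).trans (coset_sub n hn)) hsub


end
end
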